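/- Let N ≥ 2 be an integer and set a(s) = (N−1)/(2N) − s/N and c(s) = (N−1)/(2N) − frac((s+2)/N) for s = 0, …, N−1, where frac denotes the fractional part (so c(s) = a((s+2) mod N)). Then Σ_{s=0}^{N−1} c(s) = 0 and Σ_{s=0}^{N−1} a(s)·c(s) = (N²−12N+23)/(12N). -/

import Mathlib

open Finset

/-!
Since `c(s) = a((s + 2) mod N)`, the sequence `c` is a cyclic shift of `a`. A cyclic shift permutes
the summands, so `∑ c = ∑ a = 0`, and by polarization `∑ a c` equals `∑ a ^ 2` minus half of the sum
of the squared increments of `a`. For a shift by `k`, such an increment is `k / N` at the `N - k`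
places where the shift does not wrap around and `k / N - 1` at the other `k`; hence
`∑ a c = (N ^ 2 - 1) / (12 N) - k (N - k) / (2 N)`.
-/

section CyclicShift

theorem sum_range_comp_add_mod {M : Type*} [AddCommMonoid M] (f : ℕ → M) (N k : ℕ) :
    ∑ s ∈ range N, f ((s + k) % N) = ∑ s ∈ range N, f s := by
  have sum_Ico : ∑ t ∈ Ico k (k + N), f (t % N) = ∑ s ∈ range N, f s := by
    rw [← Nat.image_Ico_mod k N, sum_image (Nat.mod_injOn_Ico k N)]
  simpa [sum_Ico_eq_sum_range, add_comm k] using sum_Ico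

theorem two_mul_sum_range_mul_comp_add_mod {R : Type*} [CommRing R] (f : ℕ → R) (N k : ℕ) :
    2 * ∑ s ∈ range N, f s * f ((s + k) % N) =
      2 * ∑ s ∈ range N, f s ^ 2 - ∑ s ∈ range N, (f s - f ((s + k) % N)) ^ 2 := by
  have sum_sq_shift := sum_range_comp_add_mod (fun s ↦ f s ^ 2) N k
  simp only [sub_sq, sum_add_distrib, sum_sub_distrib, sum_sq_shift, mul_assoc, ← mul_sum]
  ring

end CyclicShift

section PowerSums

variable {K : Type*} [Field K] [CharZero K]

theorem sum_range_natCast (n : ℕ) : ∑ i ∈ range n, (i : K) = n * (n - 1) / 2 := by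
  rw [← Nat.cast_sum, sum_range_id, ← Nat.choose_two_right, Nat.cast_choose_two]

theorem sum_range_natCast_sq (n : ℕ) :
    ∑ i ∈ range n, (i : K) ^ 2 = n * (n - 1) * (2 * n - 1) / 6 := by
  induction n with
  | zero => simp
  | succ n ih =>
    rw [sum_range_succ, ih]
    push_cast
    ring

end PowerSums

/-- The Szegő-kernel exponent `a(s)` of the paper, with values in an arbitrary division ring `K`.
The exponent `c(s)` is `szegoExponent K N ((s + 2) % N)`. -/
def szegoExponent (K : Type*) [DivisionRing K] (N s : ℕ) : K :=
  ((N : K) - 1) / (2 * N) - s / N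

namespace szegoExponent

variable {K : Type*} [Field K]

theorem mod_eq_sub_fract [LinearOrder K] [IsStrictOrderedRing K] [FloorRing K] (N s : ℕ) :
    szegoExponent K N (s % N) = ((N : K) - 1) / (2 * N) - Int.fract ((s : K) / N) := by
  rw [szegoExponent, Int.fract_div_natCast_eq_div_natCast_mod]

variable [CharZero K]

theorem sum_eq_zero (N : ℕ) : ∑ s ∈ range N, szegoExponent K N s = 0 := by
  rcases eq_or_ne N 0 with rfl | hN
  · simp
  simp only [szegoExponent, sum_sub_distrib, sum_const, card_range, nsmul_eq_mul, ← sum_div,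
    sum_range_natCast]
  field_simp
  ring

theorem sum_sq {N : ℕ} (hN : N ≠ 0) :
    ∑ s ∈ range N, szegoExponent K N s ^ 2 = ((N : K) ^ 2 - 1) / (12 * N) := by
  simp only [szegoExponent, sub_sq, div_pow, sum_add_distrib, sum_sub_distrib, sum_const,
    card_range, nsmul_eq_mul, ← mul_sum, ← sum_div, sum_range_natCast, sum_range_natCast_sq]
  field_simp
  ring

theorem sum_sq_sub_shift {N k : ℕ} (hN : N ≠ 0) (hk : k ≤ N) :
    ∑ s ∈ range N, (szegoExponent K N s - szegoExponent K N ((s + k) % N)) ^ 2 =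
      k * (N - k) / N := by
  obtain ⟨m, rfl⟩ := Nat.exists_eq_add_of_le' hk
  have hN' : (m : K) + k ≠ 0 := mod_cast hN
  have increment_of_lt : ∀ s ∈ range m,
      (szegoExponent K (m + k) s - szegoExponent K (m + k) ((s + k) % (m + k))) ^ 2 =
        (k / (m + k)) ^ 2 := by
    intro s hs
    rw [Nat.mod_eq_of_lt (Nat.add_lt_add_right (mem_range.mp hs) k)]
    simp only [szegoExponent]
    push_cast
    ring
  have increment_of_wrap : ∀ i ∈ range k,
      (szegoExponent K (m + k) (m + i) -
        szegoExponent K (m + k) ((m + i + k) % (m + k))) ^ 2 = (m / (m + k)) ^ 2 := by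
    intro i hi
    have hi : i < m + k := (mem_range.mp hi).trans_le hk
    rw [add_right_comm, Nat.add_mod_left, Nat.mod_eq_of_lt hi]
    simp only [szegoExponent]
    push_cast
    ring
  rw [sum_range_add, sum_congr rfl increment_of_lt, sum_congr rfl increment_of_wrap]
  simp only [sum_const, card_range, nsmul_eq_mul]
  push_cast
  field_simp
  ring

theorem sum_mul_shift {N k : ℕ} (hN : N ≠ 0) (hk : k ≤ N) :
    ∑ s ∈ range N, szegoExponent K N s * szegoExponent K N ((s + k) % N) =
      ((N : K) ^ 2 - 1 - 6 * k * (N - k)) / (12 * N) := by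
  have polarization := two_mul_sum_range_mul_comp_add_mod (szegoExponent K N) N k
  rw [sum_sq hN, sum_sq_sub_shift hN hk] at polarization
  apply mul_left_cancel₀ (two_ne_zero : (2 : K) ≠ 0)
  rw [polarization]
  field_simp
  ring

end szegoExponent

theorem exponent_sums_ac_general {K : Type*} [Field K] [LinearOrder K] [IsStrictOrderedRing K]
    [FloorRing K] {N k : ℕ} (hN : N ≠ 0) (hk : k ≤ N) (a c : ℕ → K)
    (ha : ∀ s, a s = ((N : K) - 1) / (2 * N) - (s : K) / N)
    (hc : ∀ s, c s = ((N : K) - 1) / (2 * N) - Int.fract (((s : K) + k) / N)) :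
    (∑ s ∈ range N, c s = 0) ∧
    (∑ s ∈ range N, a s * c s = ((N : K) ^ 2 - 1 - 6 * k * (N - k)) / (12 * N)) := by
  obtain rfl : a = szegoExponent K N := funext ha
  obtain rfl : c = fun s ↦ szegoExponent K N ((s + k) % N) := by
    funext s
    rw [hc, szegoExponent.mod_eq_sub_fract, Nat.cast_add]
  constructor
  · rw [sum_range_comp_add_mod, szegoExponent.sum_eq_zero]
  · exact szegoExponent.sum_mul_shift hN hk

/-- Correlation sums of the Szegő-kernel exponents `a(s)`, `c(s)` of
Theorem 4.3: `Σ c = 0` and `Σ a·c = (N²−12N+23)/(12N)`, producing the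
coefficient of the cross term in `φ[e_{m+1}]` (Corollary 4.4) and exponents in
the Thomae-type formula (Theorem 6.2). -/
theorem exponent_sums_ac
    (N : ℕ) (hN : 2 ≤ N) (a c : ℕ → ℝ)
    (ha : ∀ s, a s = ((N : ℝ) - 1) / (2 * N) - (s : ℝ) / N)
    (hc : ∀ s, c s = ((N : ℝ) - 1) / (2 * N) - Int.fract (((s : ℝ) + 2) / N)) :
    (∑ s ∈ Finset.range N, c s = 0) ∧
    (∑ s ∈ Finset.range N, a s * c s =
      ((N : ℝ) ^ 2 - 12 * N + 23) / (12 * N)) := by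
  obtain ⟨sum_c, sum_ac⟩ := exponent_sums_ac_general (by lia) hN a c ha (mod_cast hc)
  exact ⟨sum_c, sum_ac.trans (by push_cast; ring)⟩
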